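/- For every λ ∈ ℝ define Ω_{λ,λ+4}(X,Y)(f) = −λX′Y^(5)f + X′Y^(4)f′ − 6X′Y‴f″ − 4X′Y″f‴ − (the same expression with X and Y exchanged). Then Ω_{λ,λ+4} = [[C_{λ+4,λ+4}, C_{λ,λ+4}]] (with C_{λ+4,λ+4} valued in D_{λ+4,λ+4} and C_{λ,λ+4} valued in D_{λ,λ+4}), and Ω_{λ,λ+4} is a 2-cocycle on Vect(1) with values in D_{λ,λ+4}. -/

import Mathlib

noncomputable section

/-- Polynomials over ℝ, identified with polynomial vector fields / densities on the line. -/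
abbrev P : Type := Polynomial ℝ

/-- Derivative d/dx. -/
def D : P → P := fun f => Polynomial.derivative f

/-- Iterated derivative: `Dk k f = f^(k)`. -/
def Dk (k : ℕ) : P → P := D^[k]

/-- Lie bracket on Vect(1): [X,Y] = XY' - X'Y. -/
def br (X Y : P) : P := X * D Y - D X * Y

/-- Action of the vector field X on λ-densities: `L_X^λ f = X f' + λ X' f`. -/
def Lw (l : ℝ) (X f : P) : P := X * D f + Polynomial.C l * D X * f

/-- Action on operators from F_ν to F_μ: `L_X^{ν,μ}(A) = L_X^μ ∘ A - A ∘ L_X^ν`. -/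
def LD (nu mu : ℝ) (X : P) (A : P → P) (f : P) : P := Lw mu X (A f) - A (Lw nu X f)

/-- 1-cocycle condition with values in D_{ν,μ}. -/
def IsCocycle1 (nu mu : ℝ) (c : P → P → P) : Prop :=
  ∀ X Y f, c (br X Y) f = LD nu mu X (c Y) f - LD nu mu Y (c X) f

/-- 2-cocycle condition with values in D_{ν,μ}. -/
def IsCocycle2 (nu mu : ℝ) (o : P → P → P → P) : Prop :=
  ∀ X Y Z f,
    LD nu mu X (o Y Z) f - LD nu mu Y (o X Z) f + LD nu mu Z (o X Y) f
      - o (br X Y) Z f + o (br X Z) Y f - o (br Y Z) X f = 0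

/-- Cup product of 1-cochains: `[[C₁,C₂]](X,Y) = C₁(X)∘C₂(Y) - C₁(Y)∘C₂(X)`. -/
def cup (c₁ c₂ : P → P → P) (X Y f : P) : P := c₁ X (c₂ Y f) - c₁ Y (c₂ X f)

/-- Coboundary of a 1-cochain b with values in D_{ν,μ}. -/
def cob (nu mu : ℝ) (b : P → P → P) (X Y f : P) : P :=
  LD nu mu X (b Y) f - LD nu mu Y (b X) f - b (br X Y) f


/-- Half of the 2-cocycle `Ω_{λ,λ+4}`. -/
def term10 (l : ℝ) (X Y f : P) : P :=
  -(Polynomial.C l) * D X * Dk 5 Y * f + D X * Dk 4 Y * D f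
    - 6 * D X * Dk 3 Y * Dk 2 f - 4 * D X * Dk 2 Y * Dk 3 f

/-- The 1-cochain `C_{λ,λ+4}`. -/
def c4 (l : ℝ) (X f : P) : P :=
  -(Polynomial.C l) * Dk 5 X * f + Dk 4 X * D f
    - 6 * Dk 3 X * Dk 2 f - 4 * Dk 2 X * Dk 3 f

theorem D_add (f g : P) : D (f + g) = D f + D g := by simp [D]

theorem D_sub (f g : P) : D (f - g) = D f - D g := by simp [D]

theorem D_mul (f g : P) : D (f * g) = D f * g + f * D g := by simp [D]

theorem D_C (l : ℝ) : D (Polynomial.C l) = 0 := by simp [D]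

theorem D_neg (f : P) : D (-f) = -D f := by simp [D]

theorem D_four : D 4 = 0 := by simp [D]

theorem D_six : D 6 = 0 := by simp [D]

theorem Dk2 (f : P) : Dk 2 f = D (D f) := rfl

theorem Dk3 (f : P) : Dk 3 f = D (D (D f)) := rfl

theorem Dk4 (f : P) : Dk 4 f = D (D (D (D f))) := rfl

theorem Dk5 (f : P) : Dk 5 f = D (D (D (D (D f)))) := rfl

set_option maxHeartbeats 1000000 in
theorem c4_cocycle (l : ℝ) : IsCocycle1 l (l + 4) (c4 l) := by
  intro X Y f
  have h4 : (Polynomial.C (l + 4) : P) = Polynomial.C l + 4 := by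
    rw [map_add, map_ofNat]
  simp only [c4, LD, Lw, br, Dk2, Dk3, Dk4, Dk5, D_add, D_sub, D_mul, D_C,
    D_neg, D_four, D_six, h4, neg_zero, zero_mul, zero_add]
  ring

theorem term10_eq (l : ℝ) (X Y f : P) : term10 l X Y f = D X * c4 l Y f := by
  simp only [term10, c4]; ring

/-- `Ω_{λ,λ+4} = [[C_{λ+4,λ+4},C_{λ,λ+4}]]` is a 2-cocycle with values
in `D_{λ,λ+4}`. -/
theorem Om4_two_cocycle (l : ℝ) :
    (∀ X Y f : P, term10 l X Y f - term10 l Y X f =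
      cup (fun X f => D X * f)
        (fun X f => -(Polynomial.C l) * Dk 5 X * f + Dk 4 X * D f
          - 6 * Dk 3 X * Dk 2 f - 4 * Dk 2 X * Dk 3 f) X Y f) ∧
    IsCocycle2 l (l + 4) (fun X Y f => term10 l X Y f - term10 l Y X f) := by
  refine ⟨fun X Y f => ?_, fun X Y Z f => ?_⟩
  · simp only [term10_eq, cup, c4]
  · have h1 := c4_cocycle l X Y f
    have h2 := c4_cocycle l X Z f
    have h3 := c4_cocycle l Y Z f
    have hb : ∀ A B : P, D (br A B) = A * D (D B) - D (D A) * B := by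
      intro A B
      simp only [br, D_sub, D_mul]; ring
    simp only [term10_eq, LD, Lw, D_sub, D_mul, hb] at h1 h2 h3 ⊢
    linear_combination D Z * h1 - D Y * h2 + D X * h3
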